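/- arXiv:1909.06634 — 2 statements merged into one kernel-verified Lean document; each statement's English description precedes it below -/
import Mathlib

section
/- Let g be a positive differentiable function on [γ, ∞) with γ ≥ 1, and suppose there is 0 < α < 1 with 0 < a(x; g) < α for all x ≥ γ. Then g and x ↦ x/g(x) are both increasing on [γ, ∞), and for every x > γ, ∫_γ^x dt/g(t) ≤ (1/(1−α)) · ( x/g(x) − γ/g(γ) ). -/
/-!
Since `(t / g t)' = (1 - a(t; g)) / g t`, a bound `a(·; g) ≤ α` says exactly that `t / g t` grows
at least as fast as `(1 - α) / g t`. Integrating this bounds `∫ 1 / g`, and for `α < 1` the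
derivative is positive.
-/

open Set

/-- The elasticity `a(x; g) = x g'(x) / g(x)` of a function `g` at `x`, i.e. the derivative of
`log g` with respect to `log x`. It takes the value `0` where `g` vanishes or is not
differentiable. -/
noncomputable def elasticity (g : ℝ → ℝ) (x : ℝ) : ℝ := x * deriv g x / g x

section Elasticity

variable {g : ℝ → ℝ} {D : Set ℝ} {x α a b : ℝ}

lemma deriv_pos_of_elasticity_pos (hx : 0 < x) (hgx : 0 < g x) (h : 0 < elasticity g x) :
    0 < deriv g x :=
  (mul_pos_iff_of_pos_left hx).1 ((div_pos_iff_of_pos_right hgx).1 h)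

lemma strictMonoOn_of_elasticity_pos (hD : Convex ℝ D) (hD_pos : ∀ x ∈ interior D, 0 < x)
    (hg_cont : ContinuousOn g D) (hg_pos : ∀ x ∈ interior D, 0 < g x)
    (h : ∀ x ∈ interior D, 0 < elasticity g x) : StrictMonoOn g D :=
  strictMonoOn_of_deriv_pos hD hg_cont fun x hx ↦
    deriv_pos_of_elasticity_pos (hD_pos x hx) (hg_pos x hx) (h x hx)

lemma hasDerivAt_id_div (hg : DifferentiableAt ℝ g x) (hgx : g x ≠ 0) :
    HasDerivAt (fun t ↦ t / g t) ((1 - elasticity g x) / g x) x := by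
  have hquot : (1 - elasticity g x) / g x = (1 * g x - x * deriv g x) / g x ^ 2 := by
    rw [elasticity]
    field_simp
  rw [hquot]
  exact (hasDerivAt_id' x).fun_div hg.hasDerivAt hgx

lemma strictMonoOn_id_div_of_elasticity_lt_one (hD : Convex ℝ D) (hg_cont : ContinuousOn g D)
    (hg_pos : ∀ x ∈ D, 0 < g x) (hg_diff : DifferentiableOn ℝ g (interior D))
    (h : ∀ x ∈ interior D, elasticity g x < 1) : StrictMonoOn (fun x ↦ x / g x) D := by
  refine strictMonoOn_of_deriv_pos hD (continuousOn_id.div hg_cont fun x hx ↦ (hg_pos x hx).ne')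
    fun x hx ↦ ?_
  have hgx : 0 < g x := hg_pos x (interior_subset hx)
  rw [(hasDerivAt_id_div (hg_diff.differentiableAt (isOpen_interior.mem_nhds hx)) hgx.ne').deriv]
  exact div_pos (sub_pos.2 (h x hx)) hgx

lemma one_sub_mul_integral_one_div_le (hab : a ≤ b) (hg_cont : ContinuousOn g (Icc a b))
    (hg_pos : ∀ x ∈ Icc a b, 0 < g x) (hg_diff : DifferentiableOn ℝ g (Ioo a b))
    (h : ∀ x ∈ Ioo a b, elasticity g x ≤ α) :
    (1 - α) * ∫ t in a..b, 1 / g t ≤ b / g b - a / g a := by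
  have hg_ne : ∀ x ∈ Icc a b, g x ≠ 0 := fun x hx ↦ (hg_pos x hx).ne'
  have hderiv : ∀ x ∈ Ioo a b, HasDerivAt (fun t ↦ t / g t) ((1 - elasticity g x) / g x) x :=
    fun x hx ↦ hasDerivAt_id_div (hg_diff.differentiableAt (isOpen_Ioo.mem_nhds hx))
      (hg_ne x (Ioo_subset_Icc_self hx))
  have hbound : ∀ x ∈ Ioo a b, (1 - α) * (1 / g x) ≤ (1 - elasticity g x) / g x := by
    intro x hx
    rw [mul_one_div]
    exact div_le_div_of_nonneg_right (sub_le_sub_left (h x hx) 1)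
      (hg_pos x (Ioo_subset_Icc_self hx)).le
  rw [← intervalIntegral.integral_const_mul]
  exact intervalIntegral.integral_le_sub_of_hasDeriv_right_of_le hab
    (continuousOn_id.div hg_cont hg_ne) (fun x hx ↦ (hderiv x hx).hasDerivWithinAt)
    (continuousOn_const.mul (continuousOn_const.div hg_cont hg_ne)).integrableOn_Icc hbound

end Elasticity

theorem mono_and_integral_bound_general {g : ℝ → ℝ} {γ α : ℝ} (hγ : 0 ≤ γ) (hα : α < 1)
    (hg_pos : ∀ x ∈ Ici γ, 0 < g x) (hg_cont : ContinuousOn g (Ici γ))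
    (hg_diff : DifferentiableOn ℝ g (Ioi γ))
    (h : ∀ x ∈ Ioi γ, 0 < elasticity g x ∧ elasticity g x ≤ α) :
    StrictMonoOn g (Ici γ) ∧ StrictMonoOn (fun x ↦ x / g x) (Ici γ) ∧
      ∀ x > γ, (∫ t in γ..x, 1 / g t) ≤ (1 / (1 - α)) * (x / g x - γ / g γ) := by
  refine ⟨?_, ?_, fun x hx ↦ ?_⟩
  · refine strictMonoOn_of_elasticity_pos (convex_Ici γ) ?_ hg_cont ?_ ?_ <;> rw [interior_Ici]
    exacts [fun x hx ↦ hγ.trans_lt hx, fun x hx ↦ hg_pos x (Ioi_subset_Ici_self hx),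
      fun x hx ↦ (h x hx).1]
  · refine strictMonoOn_id_div_of_elasticity_lt_one (convex_Ici γ) hg_cont hg_pos ?_ ?_ <;>
      rw [interior_Ici]
    exacts [hg_diff, fun x hx ↦ (h x hx).2.trans_lt hα]
  · rw [one_div_mul_eq_div, le_div_iff₀' (sub_pos.2 hα)]
    exact one_sub_mul_integral_one_div_le hx.le (hg_cont.mono Icc_subset_Ici_self)
      (fun t ht ↦ hg_pos t ht.1) (hg_diff.mono Ioo_subset_Ioi_self) fun t ht ↦ (h t ht.1).2

theorem mono_and_integral_bound (g : ℝ → ℝ) (γ α : ℝ) (hγ : 1 ≤ γ)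
    (hα0 : 0 < α) (hα1 : α < 1)
    (hgpos : ∀ x ≥ γ, 0 < g x)
    (hgdiff : ∀ x ≥ γ, DifferentiableAt ℝ g x)
    (ha : ∀ x ≥ γ, 0 < x * deriv g x / g x ∧ x * deriv g x / g x < α) :
    StrictMonoOn g (Set.Ici γ) ∧
      StrictMonoOn (fun x => x / g x) (Set.Ici γ) ∧
      ∀ x > γ, (∫ t in γ..x, 1 / g t) ≤ (1 / (1 - α)) * (x / g x - γ / g γ) :=
  mono_and_integral_bound_general (zero_le_one.trans hγ) hα1 hgpos
    (fun x hx ↦ (hgdiff x hx).continuousAt.continuousWithinAt)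
    (fun x hx ↦ (hgdiff x (le_of_lt hx)).differentiableWithinAt)
    fun x hx ↦ ⟨(ha x (le_of_lt hx)).1, (ha x (le_of_lt hx)).2.le⟩
end

section
/- Fix an integer q ≥ 1 and a constant γ ≥ 1 such that log_{q+1} x > 0 for all x ≥ γ. Then L_q(p+γ) · [ log_{q+1}(p+1+γ) − log_{q+1}(1+γ) ] ∼ L_{q+1}(p) as p → ∞; that is, the ratio L_q(p+γ)·[log_{q+1}(p+1+γ) − log_{q+1}(1+γ)] / L_{q+1}(p) tends to 1 as p → ∞. -/
open Finset Filter

noncomputable section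

/-- Iterated logarithm: `iterLog 1 = log`, `iterLog (j+1) = log ∘ iterLog j`. -/
def iterLog : ℕ → ℝ → ℝ
  | 0, x => x
  | j + 1, x => Real.log (iterLog j x)

/-- `Lfun q x = ∏_{j=1}^q log_j x`. -/
def Lfun (q : ℕ) (x : ℝ) : ℝ := ∏ j ∈ Finset.Icc 1 q, iterLog j x

/-!
The relation `∼` is preserved by `log` along functions tending to infinity, hence by every iterated
logarithm and by their products. All shifts of the argument `p` are equivalent to `p`, and the
subtracted constant is negligible because `log_{q+1}` tends to infinity, so the left-hand side is
equivalent to `L_q(p) · log_{q+1} p = L_{q+1}(p)`.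
-/

open Asymptotics

theorem tendsto_iterLog_atTop (j : ℕ) : Tendsto (iterLog j) atTop atTop := by
  induction j with
  | zero => exact tendsto_id
  | succ j ih => exact Real.tendsto_log_atTop.comp ih

theorem Lfun_succ (q : ℕ) (x : ℝ) : Lfun (q + 1) x = Lfun q x * iterLog (q + 1) x :=
  prod_Icc_succ_top (Nat.le_add_left 1 q) _

theorem eventually_Lfun_pos (q : ℕ) : ∀ᶠ x in atTop, 0 < Lfun q x := by
  have hfactors : ∀ᶠ x in atTop, ∀ j ∈ Icc 1 q, 0 < iterLog j x :=
    (eventually_all_finset _).2 fun j _ => (tendsto_iterLog_atTop j).eventually_gt_atTop 0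
  filter_upwards [hfactors] with x hx using prod_pos hx

theorem isEquivalent_add_const_atTop (c : ℝ) : (fun x : ℝ => x + c) ~[atTop] id :=
  IsEquivalent.refl.add_isLittleO (isLittleO_const_id_atTop c)

section IsEquivalent

variable {α : Type*} {l : Filter α} {u v w : α → ℝ}

theorem isEquivalent_iterLog_comp (huv : u ~[l] v) (hv : Tendsto v l atTop) (j : ℕ) :
    (fun x => iterLog j (u x)) ~[l] fun x => iterLog j (v x) := by
  induction j with
  | zero => exact huv
  | succ j ih => exact ih.log ((tendsto_iterLog_atTop j).comp hv)

theorem isEquivalent_Lfun_comp (huv : u ~[l] v) (hv : Tendsto v l atTop) (q : ℕ) :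
    (fun x => Lfun q (u x)) ~[l] fun x => Lfun q (v x) :=
  IsEquivalent.finsetProd fun j _ => isEquivalent_iterLog_comp huv hv j

theorem isEquivalent_iterLog_comp_sub_const (huv : u ~[l] v) (hv : Tendsto v l atTop) (j : ℕ)
    (c : ℝ) : (fun x => iterLog j (u x) - c) ~[l] fun x => iterLog j (v x) :=
  (isEquivalent_iterLog_comp huv hv j).sub_isLittleO <| isLittleO_const_left.2 <|
    .inr <| tendsto_norm_atTop_atTop.comp <| (tendsto_iterLog_atTop j).comp hv

theorem iterlog_asymptotic_general (huw : u ~[l] w) (hvw : v ~[l] w) (hw : Tendsto w l atTop)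
    (q : ℕ) (c : ℝ) :
    (fun x => Lfun q (u x) * (iterLog (q + 1) (v x) - c)) ~[l] fun x => Lfun (q + 1) (w x) := by
  simp only [Lfun_succ]
  exact (isEquivalent_Lfun_comp huw hw q).mul
    (isEquivalent_iterLog_comp_sub_const hvw hw (q + 1) c)

end IsEquivalent

theorem iterlog_asymptotic (q : ℕ) (hq : 1 ≤ q) (γ : ℝ) (hγ : 1 ≤ γ)
    (hpos : ∀ x ≥ γ, 0 < iterLog (q + 1) x) :
    Tendsto (fun p : ℝ =>
        Lfun q (p + γ) * (iterLog (q + 1) (p + 1 + γ) - iterLog (q + 1) (1 + γ)) /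
          Lfun (q + 1) p)
      atTop (nhds 1) := by
  simp only [add_assoc]
  exact (isEquivalent_iff_tendsto_one
    ((eventually_Lfun_pos (q + 1)).mono fun _ hp => hp.ne')).1 <|
    iterlog_asymptotic_general (isEquivalent_add_const_atTop γ)
      (isEquivalent_add_const_atTop (1 + γ)) tendsto_id q _
end
end
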